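/- For every c > 0 and all x, y ∈ 𝔹ⁿ = {x ∈ ℝⁿ : |x| < 1} (n ≥ 2), the inequality min{1/(2c), 1/(1+c)}·T(x,y) ≤ |x−y|/(|x−y| + 2c·L(1−|x|, 1−|y|)) ≤ max{1, 1/c}·T(x,y) holds, where T(x,y) = |x−y|/√(|x−y|² + (1−|x|²)(1−|y|²)) and L is the logarithmic mean. -/

import Mathlib

/-- The logarithmic mean of two positive reals. -/
noncomputable def logMean (a b : ℝ) : ℝ :=
  if a = b then a else (a - b) / (Real.log a - Real.log b)

theorem aux_arith {r : ℝ} (hr : 1 ≤ r) : 2 * (r - 1) ≤ (r + 1) * Real.log r := by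
  have h := Real.le_log_one_add_of_nonneg (x := r - 1) (by linarith)
  have e : 1 + (r - 1) = r := by ring
  have e2 : r - 1 + 2 = r + 1 := by ring
  rw [e, e2, div_le_iff₀ (by linarith)] at h
  linarith

theorem aux_geom {u : ℝ} (hu : 1 ≤ u) : 2 * Real.log u ≤ u - u⁻¹ := by
  have h := Real.self_le_sinh_iff.2 (Real.log_nonneg hu)
  rw [Real.sinh_log (by linarith)] at h
  linarith

theorem aux_lt {a b : ℝ} (hb : 0 < b) (hab : b < a) :
    logMean a b ≤ (a + b) / 2 ∧ Real.sqrt (a * b) ≤ logMean a b := by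
  have ha : 0 < a := hb.trans hab
  have hl : 0 < Real.log a - Real.log b := sub_pos.2 (Real.log_lt_log hb hab)
  rw [logMean, if_neg hab.ne']
  constructor
  · rw [div_le_iff₀ hl]
    have h := aux_arith (r := a / b) (by rw [le_div_iff₀ hb]; linarith)
    rw [Real.log_div ha.ne' hb.ne'] at h
    have h2 := mul_le_mul_of_nonneg_left h hb.le
    have e1 : b * (2 * (a / b - 1)) = 2 * (a - b) := by field_simp
    have e2 : b * ((a / b + 1) * (Real.log a - Real.log b))
        = (a + b) * (Real.log a - Real.log b) := by field_simp
    rw [e1, e2] at h2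
    linarith
  · rw [le_div_iff₀ hl]
    set p := Real.sqrt a with hp
    set q := Real.sqrt b with hq
    have hp0 : 0 < p := Real.sqrt_pos.2 ha
    have hq0 : 0 < q := Real.sqrt_pos.2 hb
    have hpa : a = p ^ 2 := (Real.sq_sqrt ha.le).symm
    have hqb : b = q ^ 2 := (Real.sq_sqrt hb.le).symm
    have hqp : q ≤ p := Real.sqrt_le_sqrt hab.le
    rw [Real.sqrt_mul ha.le, ← hp, ← hq]
    have h := aux_geom (u := p / q) (by rw [le_div_iff₀ hq0]; linarith)
    rw [Real.log_div hp0.ne' hq0.ne'] at h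
    have h2 := mul_le_mul_of_nonneg_left h (mul_pos hp0 hq0).le
    have e1 : p * q * (p / q - (p / q)⁻¹) = p ^ 2 - q ^ 2 := by field_simp
    rw [e1] at h2
    rw [hpa, hqb, Real.log_pow, Real.log_pow]
    push_cast
    linarith

theorem logMean_symm' (a b : ℝ) : logMean a b = logMean b a := by
  unfold logMean
  by_cases h : a = b
  · simp [h]
  · rw [if_neg h, if_neg (Ne.symm h), ← neg_sub b a, ← neg_sub (Real.log b), neg_div_neg_eq]

theorem aux_means {a b : ℝ} (ha : 0 < a) (hb : 0 < b) :
    logMean a b ≤ (a + b) / 2 ∧ Real.sqrt (a * b) ≤ logMean a b := by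
  rcases lt_trichotomy a b with h | h | h
  · have := aux_lt ha h
    rw [logMean_symm', mul_comm a b, add_comm a b]; exact this
  · subst h
    rw [logMean, if_pos rfl, Real.sqrt_mul_self ha.le]
    constructor <;> linarith
  · exact aux_lt hb h

theorem aux_poly {s d t : ℝ} (hs : 0 < s) (hd : 0 ≤ d) (hds : d ≤ s) (h1 : d ≤ 1 - s)
    (ht : 2 * d ≤ t) (ht2 : t ≤ 2 - 2 * s) :
    (t / 2 + s) ^ 2 ≤ t ^ 2 + (s ^ 2 - d ^ 2) * ((2 - s) ^ 2 - d ^ 2) := by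
  have f1 : (d + s) ^ 2 ≤ (2 * d) ^ 2 + (s ^ 2 - d ^ 2) * ((2 - s) ^ 2 - d ^ 2) := by
    have : (2 * d) ^ 2 + (s ^ 2 - d ^ 2) * ((2 - s) ^ 2 - d ^ 2) - (d + s) ^ 2
      = (s - d) * (2 * (s + d) * (1 - s - d) + (s - d) * (1 - s - d) ^ 2) := by ring
    have : 0 ≤ (s - d) * (2 * (s + d) * (1 - s - d) + (s - d) * (1 - s - d) ^ 2) := by
      have h2 : 0 ≤ s - d := by linarith
      have h3 : 0 ≤ 1 - s - d := by linarith
      positivity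
    linarith
  by_cases c1 : s ≤ 3 / 4 * (t + 2 * d)
  · nlinarith [mul_nonneg (sub_nonneg.2 ht) (sub_nonneg.2 c1)]
  by_cases c2 : 3 / 4 * (2 - 2 * s + t) ≤ s
  · have f2 : 1 ≤ (2 - 2 * s) ^ 2 + (s ^ 2 - d ^ 2) * ((2 - s) ^ 2 - d ^ 2) := by
      have : (2 - 2 * s) ^ 2 + (s ^ 2 - d ^ 2) * ((2 - s) ^ 2 - d ^ 2)
        = (1 + (1 - s - d) * (1 - s + d)) ^ 2 := by ring
      rw [this]
      have h3 : 0 ≤ (1 - s - d) * (1 - s + d) := by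
        apply mul_nonneg <;> linarith
      nlinarith
    nlinarith [mul_nonneg (sub_nonneg.2 ht2) (sub_nonneg.2 c2)]
  push Not at c1 c2
  have c3 : 3 * d ≤ s := by linarith
  by_cases c4 : s ≤ 3 / 4
  · have g1 : 8 / 9 * s ^ 2 ≤ s ^ 2 - d ^ 2 := by nlinarith
    have g2 : 3 / 2 ≤ (2 - s) ^ 2 - d ^ 2 := by nlinarith
    have g3 : 8 / 9 * s ^ 2 * (3 / 2) ≤ (s ^ 2 - d ^ 2) * ((2 - s) ^ 2 - d ^ 2) :=
      mul_le_mul g1 g2 (by norm_num) (le_trans (by positivity) g1)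
    nlinarith [sq_nonneg (t - 2 * s / 3)]
  · linarith

theorem aux_poly2 {a b t : ℝ} (ha : 0 < a) (hb : 0 < b) (ha1 : a ≤ 1) (hb1 : b ≤ 1)
    (ht : |a - b| ≤ t) (ht2 : t ≤ 2 - a - b) :
    (t / 2 + (a + b) / 2) ^ 2 ≤ t ^ 2 + a * b * ((2 - a) * (2 - b)) := by
  obtain ⟨h1, h2⟩ := abs_le.1 ht
  rcases le_total a b with h | h
  · have := aux_poly (s := (a + b) / 2) (d := (b - a) / 2) (t := t) (by linarith) (by linarith)
      (by linarith) (by linarith) (by linarith) (by linarith)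
    convert this using 2
    ring
  · have := aux_poly (s := (a + b) / 2) (d := (a - b) / 2) (t := t) (by linarith) (by linarith)
      (by linarith) (by linarith) (by linarith) (by linarith)
    convert this using 2
    ring

theorem stmt18 (n : ℕ) (hn : 2 ≤ n) (c : ℝ) (hc : 0 < c)
    (x y : EuclideanSpace ℝ (Fin n)) (hx : ‖x‖ < 1) (hy : ‖y‖ < 1) :
    min (1 / (2 * c)) (1 / (1 + c)) *
        (dist x y / Real.sqrt (dist x y ^ 2 + (1 - ‖x‖ ^ 2) * (1 - ‖y‖ ^ 2))) ≤
      dist x y / (dist x y + 2 * c * logMean (1 - ‖x‖) (1 - ‖y‖)) ∧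
    dist x y / (dist x y + 2 * c * logMean (1 - ‖x‖) (1 - ‖y‖)) ≤
      max 1 (1 / c) *
        (dist x y / Real.sqrt (dist x y ^ 2 + (1 - ‖x‖ ^ 2) * (1 - ‖y‖ ^ 2))) := by
  have hx0 := norm_nonneg x
  have hy0 := norm_nonneg y
  have ht0 : 0 ≤ dist x y := dist_nonneg
  have ht1 : |(1 - ‖x‖) - (1 - ‖y‖)| ≤ dist x y := by
    rw [dist_eq_norm, show (1 - ‖x‖) - (1 - ‖y‖) = -(‖x‖ - ‖y‖) by ring, abs_neg]
    exact abs_norm_sub_norm_le x y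
  have ht2 : dist x y ≤ 2 - (1 - ‖x‖) - (1 - ‖y‖) := by
    rw [dist_eq_norm]
    linarith [norm_sub_le x y]
  rw [show (1 - ‖x‖ ^ 2) * (1 - ‖y‖ ^ 2)
    = (1 - ‖x‖) * (1 - ‖y‖) * ((2 - (1 - ‖x‖)) * (2 - (1 - ‖y‖))) by ring]
  have ha : 0 < 1 - ‖x‖ := by linarith
  have hb : 0 < 1 - ‖y‖ := by linarith
  have ha1 : 1 - ‖x‖ ≤ 1 := by linarith
  have hb1 : 1 - ‖y‖ ≤ 1 := by linarith
  generalize 1 - ‖x‖ = a at *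
  generalize 1 - ‖y‖ = b at *
  generalize dist x y = t at *
  obtain ⟨hLu, hLl⟩ := aux_means ha hb
  have hab : 0 < a * b := mul_pos ha hb
  have hL : 0 < logMean a b := lt_of_lt_of_le (Real.sqrt_pos.2 hab) hLl
  have hL2 : a * b ≤ logMean a b ^ 2 := by
    rw [← Real.sq_sqrt hab.le]
    exact pow_le_pow_left₀ (Real.sqrt_nonneg _) hLl 2
  generalize logMean a b = L at *
  have hlow := aux_poly2 ha hb ha1 hb1 ht1 ht2
  have hK : (2 - a) * (2 - b) ≤ 4 := by nlinarith
  have hK0 : 0 < (2 - a) * (2 - b) := mul_pos (by linarith) (by linarith)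
  have hP : a * b * ((2 - a) * (2 - b)) ≤ 4 * L ^ 2 := by nlinarith
  have hP0 := mul_pos hab hK0
  generalize a * b * ((2 - a) * (2 - b)) = P at *
  have hR0 : 0 < Real.sqrt (t ^ 2 + P) := Real.sqrt_pos.2 (by positivity)
  have hR1 : t / 2 + L ≤ Real.sqrt (t ^ 2 + P) :=
    le_trans (by linarith) (Real.le_sqrt_of_sq_le hlow)
  have hR2 : t ≤ Real.sqrt (t ^ 2 + P) := Real.le_sqrt_of_sq_le (by linarith)
  have hR3 : Real.sqrt (t ^ 2 + P) ≤ t + 2 * L := by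
    apply Real.sqrt_le_iff.2
    constructor
    · positivity
    · nlinarith [mul_nonneg ht0 hL.le]
  generalize Real.sqrt (t ^ 2 + P) = R at *
  have hcL : 0 < c * L := mul_pos hc hL
  have hD : 0 < t + 2 * c * L := by nlinarith
  constructor
  · have key : min (1 / (2 * c)) (1 / (1 + c)) * (t + 2 * c * L) ≤ R := by
      rcases le_total c 1 with h | h
      · refine le_trans (mul_le_mul_of_nonneg_right (min_le_right _ _) hD.le) ?_
        rw [one_div_mul_eq_div, div_le_iff₀ (by linarith)]
        nlinarith
      · refine le_trans (mul_le_mul_of_nonneg_right (min_le_left _ _) hD.le) ?_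
        rw [one_div_mul_eq_div, div_le_iff₀ (by linarith)]
        nlinarith
    rw [← mul_div_assoc, div_le_div_iff₀ hR0 hD]
    nlinarith
  · have key : R ≤ max 1 (1 / c) * (t + 2 * c * L) := by
      rcases le_total c 1 with h | h
      · refine le_trans ?_ (mul_le_mul_of_nonneg_right (le_max_right _ _) hD.le)
        rw [one_div_mul_eq_div, le_div_iff₀ hc]
        nlinarith
      · refine le_trans ?_ (mul_le_mul_of_nonneg_right (le_max_left _ _) hD.le)
        nlinarith
    rw [← mul_div_assoc, div_le_div_iff₀ hD hR0]
    nlinarith
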